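/- (Exact Type-I error control of the randomized (smoothed) weighted MC test.) Assume the proportionality hypothesis H₀^∝, define the lower p-value p⁻(d₀, …, d_m) = Σ_{i=0}^m w_i(d₀, …, d_m) · 1[S(d_i) > S(d₀)], and fix α ∈ [0,1]. Define the conditional rejection probability r_α(d₀,…,d_m) = 1 if p(d₀,…,d_m) ≤ α; r_α = (α − p⁻)/(p − p⁻) if p⁻ ≤ α < p; and r_α = 0 if α < p⁻. Then the randomized test which, given the tuple, rejects with probability r_α has Type-I error exactly α: Σ_{(d₀,…,d_m) ∈ 𝒟^(m+1)} h(d₀,…,d_m) · r_α(d₀,…,d_m) = α. -/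

import Mathlib

open scoped NNReal Classical BigOperators

noncomputable section

/-- The joint law of the tuple `(D̃⁽⁰⁾, …, D̃⁽ᵐ⁾)`:
`h(d₀, …, d_m) = f(d₀) · ∏_{k=1}^m q(d_k | d₀)`. Here `q e d` denotes `q(e | d)`. -/
def jointLaw {D : Type*} (f : D → ℝ≥0) (q : D → D → ℝ≥0) (m : ℕ)
    (d : Fin (m + 1) → D) : ℝ≥0 :=
  f (d 0) * ∏ k ∈ Finset.univ.erase (0 : Fin (m + 1)), q (d k) (d 0)

/-- `σ_i` : the involution of `𝒟^(m+1)` swapping coordinates `0` and `i`. -/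
def swapTuple {D : Type*} (m : ℕ) (i : Fin (m + 1)) (d : Fin (m + 1) → D) :
    Fin (m + 1) → D :=
  d ∘ Equiv.swap 0 i

/-- Numerator of the weight `w_i`: `f̂(d_i) · ∏_{k ≠ i} q(d_k | d_i)`. -/
def wNum {D : Type*} (q : D → D → ℝ≥0) (fhat : D → ℝ≥0) (m : ℕ)
    (i : Fin (m + 1)) (d : Fin (m + 1) → D) : ℝ≥0 :=
  fhat (d i) * ∏ k ∈ Finset.univ.erase i, q (d k) (d i)

/-- The weight `w_i(d₀, …, d_m)`; in `ℝ≥0`, division by zero yields `0`,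
matching the convention that `w_i = 0` when the denominator vanishes. -/
def weight {D : Type*} (q : D → D → ℝ≥0) (fhat : D → ℝ≥0) (m : ℕ)
    (i : Fin (m + 1)) (d : Fin (m + 1) → D) : ℝ≥0 :=
  wNum q fhat m i d / ∑ j, wNum q fhat m j d

/-- The weighted MC randomization p-value
`p(d₀, …, d_m) = Σ_{i=0}^m w_i · 1[S(d_i) ≥ S(d₀)]`. -/
def pValue {D : Type*} (q : D → D → ℝ≥0) (fhat : D → ℝ≥0) (m : ℕ)
    (S : D → ℝ) (d : Fin (m + 1) → D) : ℝ≥0 :=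
  ∑ i, weight q fhat m i d * (if S (d 0) ≤ S (d i) then 1 else 0)

/-- The lower p-value `p⁻(d₀, …, d_m) = Σ_{i=0}^m w_i · 1[S(d_i) > S(d₀)]`. -/
def pValueMinus {D : Type*} (q : D → D → ℝ≥0) (fhat : D → ℝ≥0) (m : ℕ)
    (S : D → ℝ) (d : Fin (m + 1) → D) : ℝ≥0 :=
  ∑ i, weight q fhat m i d * (if S (d 0) < S (d i) then 1 else 0)

/-- The conditional rejection probability `r_α` of the randomized (smoothed)
test: `1` if `p ≤ α`; `(α − p⁻)/(p − p⁻)` if `p⁻ ≤ α < p`; `0` if `α < p⁻`. -/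
def rejProb {D : Type*} (q : D → D → ℝ≥0) (fhat : D → ℝ≥0) (m : ℕ)
    (S : D → ℝ) (α : ℝ≥0) (d : Fin (m + 1) → D) : ℝ≥0 :=
  if pValue q fhat m S d ≤ α then 1
  else if pValueMinus q fhat m S d ≤ α then
    (α - pValueMinus q fhat m S d) / (pValue q fhat m S d - pValueMinus q fhat m S d)
  else 0

/-- The proportionality hypothesis `H₀^∝`. -/
def PropHyp {D : Type*} (f : D → ℝ≥0) (q : D → D → ℝ≥0) (fhat : D → ℝ≥0)
    (m : ℕ) : Prop :=
  ∀ d : Fin (m + 1) → D,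
    (∃ i, 0 < jointLaw f q m (swapTuple m i d)) →
      ∃ K : ℝ≥0, 0 < K ∧ ∀ i, fhat (d i) = K * f (d i)

theorem finite_core {ι : Type*} (w : ι → ℝ≥0) (s : ι → ℝ) (α : ℝ≥0) (n : ℕ) :
    ∀ A : Finset ι, A.card = n →
    ∑ i ∈ A, w i * (if (∑ j ∈ A, w j * (if s i ≤ s j then 1 else 0)) ≤ α then 1
      else if (∑ j ∈ A, w j * (if s i < s j then 1 else 0)) ≤ α then
        (α - ∑ j ∈ A, w j * (if s i < s j then 1 else 0)) /
          ((∑ j ∈ A, w j * (if s i ≤ s j then 1 else 0)) -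
            ∑ j ∈ A, w j * (if s i < s j then 1 else 0))
      else 0) = min (∑ i ∈ A, w i) α := by
  induction n using Nat.strong_induction_on with
  | _ n ih =>
  intro A hA
  rcases A.eq_empty_or_nonempty with rfl | hne
  · simp
  obtain ⟨a, ha, hmin⟩ := A.exists_min_image s hne
  have hB := ih (A.filter (fun i => s a < s i)).card (by
    rw [← hA]
    apply Finset.card_lt_card
    rw [Finset.filter_ssubset]
    exact ⟨a, ha, lt_irrefl _⟩) _ rfl
  have hsplit : ∑ i ∈ A, w i = ∑ i ∈ A with s a < s i, w i + ∑ i ∈ A with ¬ s a < s i, w i :=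
    (Finset.sum_filter_add_sum_filter_not _ _ _).symm
  rw [← Finset.sum_filter_add_sum_filter_not A (fun i => s a < s i)]
  have e1 : ∀ i, s a < s i → ∑ j ∈ A, w j * (if s i ≤ s j then 1 else 0)
      = ∑ j ∈ A with s a < s j, w j * (if s i ≤ s j then 1 else 0) := by
    intro i hi
    rw [Finset.sum_filter]
    refine Finset.sum_congr rfl fun j _ => ?_
    split_ifs with h1 h2 <;> first | rfl | (exfalso; linarith) | simp
  have e2 : ∀ i, s a < s i → ∑ j ∈ A, w j * (if s i < s j then 1 else 0)
      = ∑ j ∈ A with s a < s j, w j * (if s i < s j then 1 else 0) := by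
    intro i hi
    rw [Finset.sum_filter]
    refine Finset.sum_congr rfl fun j _ => ?_
    split_ifs with h1 h2 <;> first | rfl | (exfalso; linarith) | simp
  have e3 : ∀ i ∈ A, ¬ s a < s i → ∑ j ∈ A, w j * (if s i ≤ s j then 1 else 0)
      = ∑ j ∈ A, w j := by
    intro i hi h
    refine Finset.sum_congr rfl fun j hj => ?_
    rw [if_pos ((not_lt.1 h).trans (hmin j hj)), mul_one]
  have e4 : ∀ i ∈ A, ¬ s a < s i → ∑ j ∈ A, w j * (if s i < s j then 1 else 0)
      = ∑ j ∈ A with s a < s j, w j := by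
    intro i hi h
    have : s i = s a := le_antisymm (not_lt.1 h) (hmin i hi)
    rw [Finset.sum_filter]
    refine Finset.sum_congr rfl fun j hj => ?_
    rw [this]; split_ifs <;> simp
  rw [Finset.sum_congr rfl (fun i hi => by
    rw [e1 i (Finset.mem_filter.1 hi).2, e2 i (Finset.mem_filter.1 hi).2]), hB,
    Finset.sum_congr (s₁ := A.filter (fun i => ¬ s a < s i)) rfl (fun i hi => by
    rw [e3 i (Finset.mem_filter.1 hi).1 (Finset.mem_filter.1 hi).2,
      e4 i (Finset.mem_filter.1 hi).1 (Finset.mem_filter.1 hi).2]), ← Finset.sum_mul, hsplit]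
  generalize (∑ i ∈ A with s a < s i, w i) = b
  generalize (∑ i ∈ A with ¬ s a < s i, w i) = c
  rw [add_tsub_cancel_left]
  by_cases h1 : b + c ≤ α
  · rw [if_pos h1, min_eq_left h1, min_eq_left (le_self_add.trans h1), mul_one]
  · rw [if_neg h1, min_eq_right (not_le.1 h1).le]
    by_cases h2 : b ≤ α
    · rw [if_pos h2, min_eq_left h2]
      have hc : c ≠ 0 := by
        rintro rfl
        exact h1 (by simpa using h2)
      rw [mul_div_cancel₀ _ hc, add_tsub_cancel_of_le h2]
    · rw [if_neg h2, min_eq_right (not_le.1 h2).le, mul_zero, add_zero]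

theorem tsum_pow_aux {D : Type*} (g : D → ENNReal) (hg : ∑' d, g d = 1) (n : ℕ) :
    ∑' d : Fin n → D, ∏ k, g (d k) = 1 := by
  induction n with
  | zero => simp
  | succ n ih =>
    rw [← (Fin.consEquiv (fun _ : Fin (n+1) => D)).tsum_eq]
    rw [ENNReal.tsum_prod']
    simp [Fin.consEquiv, Fin.prod_univ_succ, ENNReal.tsum_mul_left, ih, hg]

theorem coe_tsum_one {D : Type*} (g : D → ℝ≥0) (hg : ∑' d, g d = 1) :
    ∑' d, (g d : ENNReal) = 1 := by
  have hs : Summable g := by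
    by_contra h
    rw [tsum_eq_zero_of_not_summable h] at hg
    exact zero_ne_one hg
  rw [← ENNReal.coe_tsum hs, hg, ENNReal.coe_one]

theorem wNum_swap {D : Type*} (q : D → D → ℝ≥0) (f : D → ℝ≥0) (m : ℕ)
    (σ : Equiv.Perm (Fin (m+1))) (i : Fin (m + 1)) (d : Fin (m + 1) → D) :
    wNum q f m i (d ∘ σ) = wNum q f m (σ i) d := by
  unfold wNum
  congr 1
  refine Finset.prod_equiv σ ?_ ?_
  · intro k; simp
  · intro k _; rfl

theorem jointLaw_eq {D : Type*} (q : D → D → ℝ≥0) (f : D → ℝ≥0) (m : ℕ)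
    (d : Fin (m + 1) → D) : jointLaw f q m d = wNum q f m 0 d := rfl

theorem jointLaw_swap {D : Type*} (q : D → D → ℝ≥0) (f : D → ℝ≥0) (m : ℕ)
    (i : Fin (m + 1)) (d : Fin (m + 1) → D) :
    jointLaw f q m (swapTuple m i d) = wNum q f m i d := by
  rw [jointLaw_eq, swapTuple, wNum_swap, Equiv.swap_apply_left]

theorem weight_swap {D : Type*} (q : D → D → ℝ≥0) (f : D → ℝ≥0) (m : ℕ)
    (σ : Equiv.Perm (Fin (m+1))) (i : Fin (m + 1)) (d : Fin (m + 1) → D) :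
    weight q f m i (d ∘ σ) = weight q f m (σ i) d := by
  unfold weight
  simp only [wNum_swap]
  rw [Equiv.sum_comp σ (fun j => wNum q f m j d)]

theorem tsum_jointLaw {D : Type*} (q : D → D → ℝ≥0) (f : D → ℝ≥0) (m : ℕ)
    (hf : ∑' d, f d = 1) (hq : ∀ d, ∑' e, q e d = 1) :
    ∑' d : Fin (m + 1) → D, (jointLaw f q m d : ENNReal) = 1 := by
  rw [← (Fin.consEquiv (fun _ : Fin (m+1) => D)).tsum_eq, ENNReal.tsum_prod']
  have key : ∀ (a : D) (b : Fin m → D),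
      (jointLaw f q m (Fin.consEquiv (fun _ : Fin (m+1) => D) (a, b)) : ENNReal)
        = f a * ∏ k, (q (b k) a : ENNReal) := by
    intro a b
    have he : (Finset.univ.erase (0 : Fin (m+1))) = Finset.univ.map (Fin.succEmb m) := by
      ext k
      refine Fin.cases ?_ (fun j => ?_) k
      · simp [Fin.succ_ne_zero]
      · simp [Fin.succ_ne_zero]
    simp [jointLaw, Fin.consEquiv, he]
  simp only [key, ENNReal.tsum_mul_left]
  simp only [tsum_pow_aux _ (coe_tsum_one _ (hq _)), mul_one]
  exact coe_tsum_one f hf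

theorem pointwise_aux {D : Type*} (f : D → ℝ≥0) (q : D → D → ℝ≥0) (fhat : D → ℝ≥0) (S : D → ℝ)
    (m : ℕ) (hprop : PropHyp f q fhat m) (α : ℝ≥0) (hα : α ≤ 1) (d : Fin (m + 1) → D) :
    ∑ i, jointLaw f q m (swapTuple m i d) * rejProb q fhat m S α (swapTuple m i d)
      = α * ∑ i, jointLaw f q m (swapTuple m i d) := by
  by_cases h : ∃ i, 0 < jointLaw f q m (swapTuple m i d)
  · obtain ⟨K, hK, hKi⟩ := hprop d h
    simp only [jointLaw_swap] at h ⊢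
    have hw : ∀ i, wNum q fhat m i d = K * wNum q f m i d := by
      intro i; simp only [wNum, hKi, mul_assoc]
    set T := ∑ i, wNum q f m i d with hT
    have hT0 : T ≠ 0 := by
      obtain ⟨i, hi⟩ := h
      exact (hi.trans_le (Finset.single_le_sum (f := fun i => wNum q f m i d)
        (fun _ _ => zero_le) (Finset.mem_univ i))).ne'
    have hwt : ∀ i, wNum q f m i d = T * weight q fhat m i d := by
      intro i
      unfold weight
      simp only [hw, ← Finset.mul_sum, ← hT]
      rw [mul_div_mul_left _ _ hK.ne', mul_div_cancel₀ _ hT0]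
    have hsum : ∑ i, weight q fhat m i d = 1 := by
      apply mul_left_cancel₀ hT0
      rw [Finset.mul_sum, mul_one, hT]
      exact Finset.sum_congr rfl fun i _ => (hwt i).symm
    have hp : ∀ i, pValue q fhat m S (swapTuple m i d)
        = ∑ j, weight q fhat m j d * (if S (d i) ≤ S (d j) then 1 else 0) := by
      intro i
      unfold pValue swapTuple
      simp only [weight_swap, Function.comp_apply, Equiv.swap_apply_left]
      exact Equiv.sum_comp (Equiv.swap 0 i)
        (fun j => weight q fhat m j d * (if S (d i) ≤ S (d j) then 1 else 0))
    have hpm : ∀ i, pValueMinus q fhat m S (swapTuple m i d)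
        = ∑ j, weight q fhat m j d * (if S (d i) < S (d j) then 1 else 0) := by
      intro i
      unfold pValueMinus swapTuple
      simp only [weight_swap, Function.comp_apply, Equiv.swap_apply_left]
      exact Equiv.sum_comp (Equiv.swap 0 i)
        (fun j => weight q fhat m j d * (if S (d i) < S (d j) then 1 else 0))
    have core := finite_core (fun i => weight q fhat m i d) (fun i => S (d i)) α _ Finset.univ rfl
    rw [hsum, min_eq_right hα] at core
    have : ∑ i, weight q fhat m i d * rejProb q fhat m S α (swapTuple m i d) = α := by
      unfold rejProb
      simp only [hp, hpm]
      exact core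
    simp only [hwt, mul_assoc]
    rw [← Finset.mul_sum, this, mul_comm]
  · push Not at h
    have h0 : ∀ i, jointLaw f q m (swapTuple m i d) = 0 := fun i => le_antisymm (h i) zero_le
    simp [h0]

theorem tsum_swap_aux {D : Type*} (m : ℕ) (F : (Fin (m + 1) → D) → ENNReal) :
    ∑' d, ∑ i, F (swapTuple m i d) = (m + 1 : ℕ) * ∑' d, F d := by
  rw [Summable.tsum_finsetSum (fun _ _ => ENNReal.summable)]
  have : ∀ i, ∑' d, F (swapTuple m i d) = ∑' d, F d := by
    intro i
    exact ((Equiv.swap 0 i).arrowCongr (Equiv.refl D)).tsum_eq F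
  simp [this]

/-- **(Exact Type-I error control of the randomized (smoothed) weighted MC
test.)** Under `H₀^∝`, the randomized test rejecting with conditional
probability `r_α` has Type-I error exactly `α`. -/
theorem smoothed_weighted_mc_test_exact
    {D : Type*} [Countable D]
    (f : D → ℝ≥0) (q : D → D → ℝ≥0) (fhat : D → ℝ≥0) (S : D → ℝ)
    (m : ℕ) (hm : 1 ≤ m)
    (hf : ∑' d, f d = 1)
    (hq : ∀ d, ∑' e, q e d = 1)
    (hprop : PropHyp f q fhat m)
    (α : ℝ≥0) (hα : α ≤ 1) :
    ∑' d : Fin (m + 1) → D, jointLaw f q m d * rejProb q fhat m S α d = α := by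
  have h1 := tsum_swap_aux m (fun d => ((jointLaw f q m d * rejProb q fhat m S α d : ℝ≥0) : ENNReal))
  have h2 := tsum_swap_aux m (fun d => (jointLaw f q m d : ENNReal))
  simp only [← ENNReal.ofNNReal_finsetSum, pointwise_aux f q fhat S m hprop α hα] at h1
  simp only [← ENNReal.ofNNReal_finsetSum] at h2
  simp only [ENNReal.coe_mul α, ENNReal.tsum_mul_left] at h1
  rw [h2, tsum_jointLaw q f m hf hq, mul_one, mul_comm] at h1
  have h3 := (ENNReal.mul_right_inj (by simp) (ENNReal.natCast_ne_top _)).1 h1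
  have hs := ENNReal.tsum_coe_ne_top_iff_summable.1 (h3 ▸ ENNReal.coe_ne_top)
  rw [← ENNReal.coe_tsum hs] at h3
  exact (ENNReal.coe_injective h3).symm
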